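/- Let X ⊂ S² be a nonseparating continuum, and let Y be an indecomposable continuum contained in the boundary of X. If there exists a subcontinuum Z of X intersecting an internal composant of Y, then either Z is contained in Y or Y is contained in Z. -/

import Mathlib

/-!
Suppose neither `Z ⊆ Y` nor `Y ⊆ Z`. Since `Z` meets an internal composant of `Y`, it meets all of
them. The contradiction is that every composant of `Y` then carves out an open subset of the sphere,
that these open sets are pairwise disjoint, and that an indecomposable continuum has uncountably
many composants.

*Enlarging `Z`.* By the Baire category theorem, `Z` can be enlarged inside `Z ∪ Y` to a continuum
`Z₁` which contains a nonempty relatively open part of `Y` but not all of `Y`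
(`IsIndecomposable.exists_enlargement`). Let `O` be the component of the complement of `Z₁`
containing the connected set `Xᶜ`. Its complement is a continuum
(`isPreconnected_compl_component`), and it meets `Y` in the same points as `Z₁`, because every
point of `Y` is a limit of points of `Xᶜ`.

*Carving out open sets.* Every composant contains a continuum `Q` such that `Oᶜ ∩ Q` is
disconnected: otherwise the intersection of `Oᶜ` with the composant would be connected, and its
closure would be a proper subcontinuum of `Y` with interior, which indecomposability excludes
(`IsIndecomposable.exists_disconnected_inter`). By Janiszewski's theorem
(`exists_open_of_disconnected_inter`) the continua `Oᶜ` and `Q` together cut off a nonempty open set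
`G` from the rest of the sphere. It misses `Xᶜ`, hence also `Y`.

*Disjointness.* If the sets `G₁` and `G₂` of two composants met, then `G₁ ∩ G₂` would be relatively
clopen in the connected set `O`: the frontier of `Gᵢ` in `O` lies in `Qᵢ`, the sets `Q₁` and `Q₂`
are disjoint, and the `Gᵢ` miss `Y`. So `G₁ ∩ G₂` would contain `O` and hence `Xᶜ`.

*Janiszewski's theorem.* It is proved for compact plane sets with continuous logarithms. If `K` does
not wind around any point off it, every continuous nonvanishing function on `K` has a continuous
logarithm (`NoWinding.hasLog`): logarithms exist on small pieces, and logarithms on the two sides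
of a line are glued by removing their jumps along the line (`HasLog.glue`). If `A ∩ B` splits into
two closed pieces, a function on `A ∪ B` that runs once around the circle between these pieces
along `A`, and is constant on `B`, has no continuous logarithm (`not_noWinding_union`).
-/

open Set Metric Topology Filter

noncomputable section

/-- The 2-dimensional sphere, realized as the unit sphere in `ℝ³`. -/
abbrev S2 : Type := ↥(Metric.sphere (0 : EuclideanSpace ℝ (Fin 3)) 1)

/-- A continuum is a nonempty compact connected (metric) space. -/
def IsContinuum {α : Type*} [TopologicalSpace α] (X : Set α) : Prop :=
  IsCompact X ∧ IsConnected X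

/-- A continuum is indecomposable when it is not the union of two proper subcontinua. -/
def IsIndecomposable {α : Type*} [TopologicalSpace α] (X : Set α) : Prop :=
  IsContinuum X ∧
    ¬ ∃ A B : Set α, IsContinuum A ∧ A ⊆ X ∧ A ≠ X ∧
      IsContinuum B ∧ B ⊆ X ∧ B ≠ X ∧ A ∪ B = X

/-- The composant of a point `p` in a continuum `X`: the union of all proper
subcontinua of `X` containing `p`. -/
def composant {α : Type*} [TopologicalSpace α] (X : Set α) (p : α) : Set α :=
  ⋃₀ {K : Set α | IsContinuum K ∧ K ⊆ X ∧ K ≠ X ∧ p ∈ K}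

/-- `C` is a composant of `X` when it is the composant of some point of `X`. -/
def IsComposant {α : Type*} [TopologicalSpace α] (X C : Set α) : Prop :=
  ∃ p ∈ X, C = composant X p

/-- A composant `C` of `X` is internal when every continuum intersecting `C`
but not contained in `X` intersects every composant of `X`. -/
def IsInternalComposant {α : Type*} [TopologicalSpace α] (X C : Set α) : Prop :=
  IsComposant X C ∧
    ∀ L : Set α, IsContinuum L → (L ∩ C).Nonempty → ¬ L ⊆ X →
      ∀ C' : Set α, IsComposant X C' → (L ∩ C').Nonempty

/-- An irreducible decomposition of a continuum `X`: a finite collection of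
indecomposable subcontinua of `X` whose union is `X`, none of which is contained
in the union of the others. -/
def IsIrreducibleDecomposition {α : Type*} [TopologicalSpace α]
    (X : Set α) {n : ℕ} (A : Fin n → Set α) : Prop :=
  (∀ i, IsIndecomposable (A i) ∧ A i ⊆ X) ∧
    X = ⋃ i, A i ∧
    ∀ j, ¬ A j ⊆ ⋃ i ∈ ({j}ᶜ : Set (Fin n)), A i

/-- A set `A` separates the sphere when its complement is disconnected. -/
def Separates (A : Set S2) : Prop := ¬ IsPreconnected Aᶜ

/-- A simple arc in the sphere with endpoints `a` and `b`. -/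
def IsSimpleArc (A : Set S2) (a b : S2) : Prop :=
  ∃ γ : ℝ → S2, ContinuousOn γ (Icc 0 1) ∧ InjOn γ (Icc 0 1) ∧
    γ '' Icc 0 1 = A ∧ γ 0 = a ∧ γ 1 = b

/-- `f` is locally topologically conjugate, at the point `c`, to the map
`z ↦ z ^ k` of the unit disk (so `c` is a critical point of local degree `k - 1`
when `k ≥ 2`). -/
def LocallyZPowAt (f : S2 → S2) (c : S2) (k : ℕ) : Prop :=
  ∃ (φ : PartialHomeomorph S2 ℂ) (ψ : PartialHomeomorph ℂ S2),
    c ∈ φ.source ∧ φ.target = Metric.ball (0 : ℂ) 1 ∧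
    ψ.source = Metric.ball (0 : ℂ) 1 ∧ f c ∈ ψ.target ∧
    ∀ x ∈ φ.source, f x = ψ ((φ x) ^ k)

/-- A branched covering of the sphere of degree `d`: a continuous map which is a
`d`-fold covering map away from a finite set of critical points, near each of which
it is locally conjugate to `z ↦ z ^ k` on the unit disk for some `k ≥ 2`. -/
def IsBranchedCovering (f : S2 → S2) (d : ℕ) : Prop :=
  Continuous f ∧
    ∃ Crit : Set S2, Crit.Finite ∧
      (∀ c ∈ Crit, ∃ k, 2 ≤ k ∧ LocallyZPowAt f c k) ∧
      IsCoveringMapOn f ((f '' Crit)ᶜ) ∧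
      ∀ y ∉ f '' Crit, (f ⁻¹' {y}).ncard = d

/-- `f` is a polynomial-like mapping of degree `d`, with fully invariant simply
connected region `R` (whose complement has more than one point) containing the
critical point `c` of local degree `d - 1`.  The Julia set is `J(f) = frontier R`
and the filled Julia set is `Rᶜ`. -/
def IsPolynomialLike (f : S2 → S2) (d : ℕ) (R : Set S2) (c : S2) : Prop :=
  IsBranchedCovering f d ∧
    IsOpen R ∧ IsConnected R ∧ SimplyConnectedSpace ↥R ∧
    Set.Nontrivial Rᶜ ∧ f ⁻¹' R = R ∧
    c ∈ R ∧ LocallyZPowAt f c d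

/-- A crosscut of a region `U`: a simple arc contained in the closure of `U`
meeting the boundary of `U` exactly at its two (distinct) endpoints. -/
def IsCrosscut (U A : Set S2) : Prop :=
  ∃ a b : S2, a ≠ b ∧ IsSimpleArc A a b ∧ A ⊆ closure U ∧
    A ∩ frontier U = {a, b}

/-- A fundamental chain in `U`: a nested sequence of regions `Rc k`, each a
connected component of `U \ A k` for crosscuts `A k` whose diameters tend to `0`.
The impression of the corresponding prime end is `⋂ k, closure (Rc k)`. -/
def IsFundamentalChain (U : Set S2) (Rc : ℕ → Set S2) : Prop :=
  ∃ A : ℕ → Set S2,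
    (∀ k, IsCrosscut U (A k)) ∧
    (∀ k, ∃ x ∈ U \ A k, Rc k = connectedComponentIn (U \ A k) x) ∧
    (∀ k, Rc (k + 1) ⊆ Rc k) ∧
    Tendsto (fun k => Metric.diam (A k)) atTop (nhds 0)

end

/-! ### Proper subcontinua and composants of an indecomposable continuum -/

/-- If `K` is a connected subset of a connected set `Y` and `Y \ K` is split by two open sets
`u`, `v`, then removing from `Y` the piece of `Y \ K` lying in `v` leaves a connected set. -/
lemma isPreconnected_diff_of_split {α : Type*} [TopologicalSpace α] {Y K u v : Set α}
    (hY : IsPreconnected Y) (hYc : IsClosed Y) (hK : IsPreconnected K) (hKne : K.Nonempty)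
    (hKc : IsClosed K) (hKY : K ⊆ Y) (hu : IsOpen u) (hv : IsOpen v)
    (hcov : Y \ K ⊆ u ∪ v) (hdis : (Y \ K) ∩ (u ∩ v) = ∅) :
    IsPreconnected (Y \ (Kᶜ ∩ v)) := by
  obtain ⟨k, hk⟩ := hKne
  have hM : IsClosed (Y \ (Kᶜ ∩ v)) := hYc.sdiff (hKc.isOpen_compl.inter hv)
  have hN : IsClosed (Y \ (Kᶜ ∩ u)) := hYc.sdiff (hKc.isOpen_compl.inter hu)
  have hdis' : ∀ x, x ∈ Y → x ∉ K → x ∈ u → x ∈ v → False := fun x h1 h2 h3 h4 => by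
    have : x ∈ (Y \ K) ∩ (u ∩ v) := ⟨⟨h1, h2⟩, h3, h4⟩
    rw [hdis] at this
    exact this
  have key : ∀ c d : Set α, IsClosed c → IsClosed d → Y \ (Kᶜ ∩ v) ⊆ c ∪ d →
      (Y \ (Kᶜ ∩ v)) ∩ (c ∩ d) = ∅ → K ⊆ c → Y \ (Kᶜ ∩ v) ⊆ c := by
    intro c d hc hd hcd hdj hKsub
    have hdj' : ∀ x, x ∈ Y \ (Kᶜ ∩ v) → x ∈ c → x ∈ d → False := fun x h1 h2 h3 => by
      have : x ∈ (Y \ (Kᶜ ∩ v)) ∩ (c ∩ d) := ⟨h1, h2, h3⟩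
      rw [hdj] at this
      exact this
    have h := (isPreconnected_iff_subset_of_disjoint_closed.1 hY)
      ((Y \ (Kᶜ ∩ v)) ∩ d) (((Y \ (Kᶜ ∩ v)) ∩ c) ∪ (Y \ (Kᶜ ∩ u)))
      (hM.inter hd) ((hM.inter hc).union hN) ?_ ?_
    · rcases h with h | h
      · exact (hdj' k (h (hKY hk)).1 (hKsub hk) (h (hKY hk)).2).elim
      · intro x hx
        rcases h hx.1 with h1 | h1
        · exact h1.2
        · by_cases hxK : x ∈ K
          · exact hKsub hxK
          · exfalso
            rcases hcov ⟨hx.1, hxK⟩ with h2 | h2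
            · exact h1.2 ⟨hxK, h2⟩
            · exact hx.2 ⟨hxK, h2⟩
    · intro x hx
      by_cases hxM : x ∈ Y \ (Kᶜ ∩ v)
      · rcases hcd hxM with h1 | h1
        · exact Or.inr (Or.inl ⟨hxM, h1⟩)
        · exact Or.inl ⟨hxM, h1⟩
      · have hxv : x ∈ Kᶜ ∩ v := by
          by_contra h1
          exact hxM ⟨hx, h1⟩
        exact Or.inr (Or.inr ⟨hx, fun h1 => hdis' x hx hxv.1 h1.2 hxv.2⟩)
    · ext x
      simp only [mem_inter_iff, mem_empty_iff_false, iff_false]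
      rintro ⟨hxY, ⟨hxM, hxd⟩, ⟨-, hxc⟩ | hxN⟩
      · exact hdj' x hxM hxc hxd
      · by_cases hxK : x ∈ K
        · exact hdj' x hxM (hKsub hxK) hxd
        · rcases hcov ⟨hxY, hxK⟩ with h2 | h2
          · exact hxN.2 ⟨hxK, h2⟩
          · exact hxM.2 ⟨hxK, h2⟩
  rw [isPreconnected_iff_subset_of_disjoint_closed]
  intro c d hc hd hcd hdj
  have hKM : K ⊆ Y \ (Kᶜ ∩ v) := fun x hx => ⟨hKY hx, fun h => h.1 hx⟩
  rcases (isPreconnected_iff_subset_of_disjoint_closed.1 hK) c d hc hd (hKM.trans hcd)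
    (subset_empty_iff.1 (hdj ▸ inter_subset_inter_left _ hKM)) with h | h
  · exact Or.inl (key c d hc hd hcd hdj h)
  · exact Or.inr (key d c hd hc (by rwa [union_comm]) (by rwa [inter_comm d c]) h)

/-- Proper subcontinua of an indecomposable continuum have empty interior in it. -/
lemma IsIndecomposable.not_inter_subset {α : Type*} [TopologicalSpace α] [T2Space α]
    {Y K U : Set α} (hY : IsIndecomposable Y) (hK : IsContinuum K) (hKY : K ⊆ Y) (hne : K ≠ Y)
    (hU : IsOpen U) (hUY : (U ∩ Y).Nonempty) : ¬ U ∩ Y ⊆ K := by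
  intro hUK
  obtain ⟨⟨hYcpt, hYconn⟩, hind⟩ := hY
  have hYc := hYcpt.isClosed
  have hKc := hK.1.isClosed
  obtain ⟨q, hqU, hqY⟩ := hUY
  obtain ⟨r, hrY, hrK⟩ : ∃ r ∈ Y, r ∉ K := by
    by_contra! h
    exact hne (hKY.antisymm h)
  by_cases hpre : IsPreconnected (Y \ K)
  · have hsub : closure (Y \ K) ⊆ Y := closure_minimal sdiff_subset hYc
    refine hind ⟨K, closure (Y \ K), hK, hKY, hne,
      ⟨hYcpt.of_isClosed_subset isClosed_closure hsub, ⟨⟨r, subset_closure ⟨hrY, hrK⟩⟩,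
        hpre.closure⟩⟩, hsub, ?_, ?_⟩
    · intro heq
      have hq : q ∈ closure (Y \ K) := by rw [heq]; exact hqY
      obtain ⟨x, hxU, hxY, hxK⟩ := _root_.mem_closure_iff.1 hq U hU hqU
      exact hxK (hUK ⟨hxU, hxY⟩)
    · apply Subset.antisymm (union_subset hKY hsub)
      intro x hx
      by_cases hxK : x ∈ K
      · exact Or.inl hxK
      · exact Or.inr (subset_closure ⟨hx, hxK⟩)
  · unfold IsPreconnected at hpre
    push Not at hpre
    obtain ⟨u, v, hu, hv, hcov, ⟨a, ⟨haY, haK⟩, hau⟩, ⟨b, ⟨hbY, hbK⟩, hbv⟩, hdis⟩ := hpre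
    have hdis' : ∀ x, x ∈ Y → x ∉ K → x ∈ u → x ∈ v → False := fun x h1 h2 h3 h4 => by
      have : x ∈ (Y \ K) ∩ (u ∩ v) := ⟨⟨h1, h2⟩, h3, h4⟩
      rw [hdis] at this
      exact this
    obtain ⟨k, hk⟩ := hK.2.1
    refine hind ⟨Y \ (Kᶜ ∩ v), Y \ (Kᶜ ∩ u), ⟨hYcpt.of_isClosed_subset
      (hYc.sdiff (hKc.isOpen_compl.inter hv)) sdiff_subset, ⟨k, hKY hk, fun h => h.1 hk⟩,
      isPreconnected_diff_of_split hYconn.2 hYc hK.2.2 hK.2.1 hKc hKY hu hv hcov hdis⟩,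
      sdiff_subset, ?_, ⟨hYcpt.of_isClosed_subset
      (hYc.sdiff (hKc.isOpen_compl.inter hu)) sdiff_subset, ⟨k, hKY hk, fun h => h.1 hk⟩,
      isPreconnected_diff_of_split hYconn.2 hYc hK.2.2 hK.2.1 hKc hKY hv hu
        (by rwa [union_comm]) (by rwa [inter_comm v u])⟩, sdiff_subset, ?_, ?_⟩
    · intro heq
      exact (heq.superset hbY).2 ⟨hbK, hbv⟩
    · intro heq
      exact (heq.superset haY).2 ⟨haK, hau⟩
    · apply Subset.antisymm (union_subset sdiff_subset sdiff_subset)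
      intro x hx
      by_cases h : x ∈ Kᶜ ∩ v
      · exact Or.inr ⟨hx, fun h' => hdis' x hx h.1 h'.2 h.2⟩
      · exact Or.inl ⟨hx, h⟩

/-- The Baire category theorem for a nonempty closed subset `Y` of a compact metric space. -/
lemma exists_open_inter_subset_of_cover {α ι : Type*} [MetricSpace α] [CompactSpace α]
    [Countable ι] {Y : Set α} (hYc : IsClosed Y) (hYne : Y.Nonempty) {F : ι → Set α}
    (hF : ∀ i, IsClosed (F i)) (hcov : Y ⊆ ⋃ i, F i) :
    ∃ i, ∃ U, IsOpen U ∧ (U ∩ Y).Nonempty ∧ U ∩ Y ⊆ F i := by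
  have : CompactSpace Y := isCompact_iff_compactSpace.1 hYc.isCompact
  have : Nonempty Y := hYne.to_subtype
  obtain ⟨i, x, hx⟩ := nonempty_interior_of_iUnion_of_closed
    (f := fun i => ((↑) : Y → α) ⁻¹' F i) (fun i => (hF i).preimage continuous_subtype_val) (by
      rw [← preimage_iUnion]
      exact eq_univ_of_forall fun x => hcov x.2)
  obtain ⟨U, hU, hUeq⟩ := isOpen_induced_iff.1
    (isOpen_interior (s := ((↑) : Y → α) ⁻¹' F i))
  refine ⟨i, U, hU, ⟨x, ?_, x.2⟩, ?_⟩
  · have : x ∈ ((↑) : Y → α) ⁻¹' U := hUeq ▸ hx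
    exact this
  · rintro z ⟨hzU, hzY⟩
    have : (⟨z, hzY⟩ : Y) ∈ ((↑) : Y → α) ⁻¹' U := hzU
    rw [hUeq] at this
    have h : (⟨z, hzY⟩ : Y) ∈ ((↑) : Y → α) ⁻¹' F i := interior_subset this
    exact h

/-- Composants are dense. The component of `p` in `Y \ V`, for a small open `V`, reaches the
closure of `V`: otherwise a clopen subset of `Y \ V` containing `p` and missing `closure V` would
be clopen in `Y`. -/
lemma composant_dense {α : Type*} [MetricSpace α] [CompactSpace α] {Y U : Set α} {p : α}
    (hY : IsContinuum Y) (hnt : Y.Nontrivial) (hp : p ∈ Y) (hU : IsOpen U)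
    (hUY : (U ∩ Y).Nonempty) : (U ∩ composant Y p).Nonempty := by
  obtain ⟨q, hqU, hqY⟩ := hUY
  by_cases hpU : p ∈ U
  · refine ⟨p, hpU, {p}, ⟨⟨isCompact_singleton, isConnected_singleton⟩,
      singleton_subset_iff.2 hp, ?_, rfl⟩, rfl⟩
    rintro rfl
    exact not_nontrivial_singleton hnt
  have hYc := hY.1.isClosed
  obtain ⟨V, hV, hqV, hVU⟩ : ∃ V, IsOpen V ∧ q ∈ V ∧ closure V ⊆ U := by
    obtain ⟨ε, hε, hb⟩ := Metric.isOpen_iff.1 hU q hqU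
    refine ⟨ball q (ε / 2), isOpen_ball, mem_ball_self (by positivity), ?_⟩
    exact (closure_ball_subset_closedBall).trans
      ((closedBall_subset_ball (by linarith)).trans hb)
  have hpF : p ∈ Y \ V := ⟨hp, fun h => hpU (hVU (subset_closure h))⟩
  have hFc : IsClosed (Y \ V) := hYc.sdiff hV
  have : CompactSpace ↥(Y \ V) := isCompact_iff_compactSpace.1 hFc.isCompact
  by_contra hemp
  have hL : connectedComponentIn (Y \ V) p ⊆ composant Y p := by
    have hcpt : IsCompact (connectedComponentIn (Y \ V) p) := by
      rw [connectedComponentIn_eq_image hpF]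
      exact isClosed_connectedComponent.isCompact.image continuous_subtype_val
    refine subset_sUnion_of_mem ⟨⟨hcpt, isConnected_connectedComponentIn_iff.2 hpF⟩,
      (connectedComponentIn_subset _ _).trans sdiff_subset, ?_, mem_connectedComponentIn hpF⟩
    intro heq
    have : q ∈ connectedComponentIn (Y \ V) p := heq.superset hqY
    exact (connectedComponentIn_subset _ _ this).2 hqV
  have hdis : ∀ x ∈ connectedComponentIn (Y \ V) p, x ∉ closure V := fun x hx hxV =>
    hemp ⟨x, hVU hxV, hL hx⟩
  have : Nonempty {s : Set ↥(Y \ V) // IsClopen s ∧ (⟨p, hpF⟩ : ↥(Y \ V)) ∈ s} :=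
    ⟨⟨univ, isClopen_univ, mem_univ _⟩⟩
  obtain ⟨C, hCc, hpC, hCV⟩ : ∃ C : Set ↥(Y \ V), IsClopen C ∧ (⟨p, hpF⟩ : ↥(Y \ V)) ∈ C ∧
      ∀ x ∈ C, (x : α) ∉ closure V := by
    have h := exists_subset_nhds_of_isCompact'
      (V := fun s : {s : Set ↥(Y \ V) // IsClopen s ∧ (⟨p, hpF⟩ : ↥(Y \ V)) ∈ s} => s.1)
      (U := {x : ↥(Y \ V) | (x : α) ∉ closure V})
      (fun a b => ⟨⟨a.1 ∩ b.1, a.2.1.inter b.2.1, a.2.2, b.2.2⟩, inter_subset_left,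
        inter_subset_right⟩) (fun s => s.2.1.1.isCompact) (fun s => s.2.1.1) ?_
    · obtain ⟨s, hs⟩ := h
      exact ⟨s.1, s.2.1, s.2.2, hs⟩
    · intro x hx
      rw [← connectedComponent_eq_iInter_isClopen] at hx
      apply IsOpen.mem_nhds
      · exact isClosed_closure.isOpen_compl.preimage continuous_subtype_val
      · apply hdis
        rw [connectedComponentIn_eq_image hpF]
        exact ⟨x, hx, rfl⟩
  have h1 : IsClosed (((↑) : ↥(Y \ V) → α) '' C) :=
    (hCc.1.isCompact.image continuous_subtype_val).isClosed
  have h2 : IsClosed (((↑) : ↥(Y \ V) → α) '' Cᶜ) :=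
    (hCc.compl.1.isCompact.image continuous_subtype_val).isClosed
  obtain ⟨x, -, ⟨y, hy, rfl⟩, hx⟩ := (isPreconnected_closed_iff.1 hY.2.2) _ _ h1
    (h2.union isClosed_closure) (fun x hx => by
      by_cases hxV : x ∈ V
      · exact Or.inr (Or.inr (subset_closure hxV))
      · by_cases hxC : (⟨x, hx, hxV⟩ : ↥(Y \ V)) ∈ C
        · exact Or.inl ⟨_, hxC, rfl⟩
        · exact Or.inr (Or.inl ⟨_, hxC, rfl⟩))
    ⟨p, hp, _, hpC, rfl⟩ ⟨q, hqY, Or.inr (subset_closure hqV)⟩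
  rcases hx with ⟨z, hz, hzy⟩ | hx
  · exact hz (Subtype.ext hzy ▸ hy)
  · exact hCV y hy hx

lemma mem_composant_self {α : Type*} [TopologicalSpace α] {Y : Set α} {p : α}
    (hnt : Y.Nontrivial) (hp : p ∈ Y) : p ∈ composant Y p := by
  refine ⟨{p}, ⟨⟨isCompact_singleton, isConnected_singleton⟩,
    singleton_subset_iff.2 hp, ?_, rfl⟩, rfl⟩
  rintro rfl
  exact not_nontrivial_singleton hnt

/-- Two proper subcontinua of an indecomposable continuum which meet have a proper union. -/
lemma IsIndecomposable.union_proper {α : Type*} [TopologicalSpace α] {Y K L : Set α}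
    (hY : IsIndecomposable Y) (hK : IsContinuum K ∧ K ⊆ Y ∧ K ≠ Y)
    (hL : IsContinuum L ∧ L ⊆ Y ∧ L ≠ Y) (h : (K ∩ L).Nonempty) :
    IsContinuum (K ∪ L) ∧ K ∪ L ⊆ Y ∧ K ∪ L ≠ Y :=
  ⟨⟨hK.1.1.union hL.1.1, hK.1.2.union h hL.1.2⟩, union_subset hK.2.1 hL.2.1, fun heq =>
    hY.2 ⟨K, L, hK.1, hK.2.1, hK.2.2, hL.1, hL.2.1, hL.2.2, heq⟩⟩

/-- Composants of an indecomposable continuum with a common point coincide; by symmetry one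
inclusion is enough. -/
lemma IsIndecomposable.composant_subset_of_mem {α : Type*} [TopologicalSpace α] {Y : Set α}
    {p p' q : α} (hY : IsIndecomposable Y) (h : q ∈ composant Y p) (h' : q ∈ composant Y p') :
    composant Y p ⊆ composant Y p' := by
  obtain ⟨K, ⟨hK1, hK2, hK3, hpK⟩, hqK⟩ := h
  obtain ⟨K', ⟨hK1', hK2', hK3', hpK'⟩, hqK'⟩ := h'
  rintro x ⟨L, ⟨hL1, hL2, hL3, hpL⟩, hxL⟩
  have h1 := hY.union_proper ⟨hL1, hL2, hL3⟩ ⟨hK1, hK2, hK3⟩ ⟨p, hpL, hpK⟩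
  have h2 := hY.union_proper h1 ⟨hK1', hK2', hK3'⟩ ⟨q, Or.inr hqK, hqK'⟩
  exact ⟨_, ⟨h2.1, h2.2.1, h2.2.2, Or.inr hpK'⟩, Or.inl (Or.inl hxL)⟩

/-- An indecomposable continuum has uncountably many composants: each one is covered by the
countably many continua `closure (⋃ {K ∋ p | K ∩ B = ∅})`, with `B` in a countable basis, and
these have empty interior in `Y`. -/
lemma IsIndecomposable.not_countable_composants {α : Type*} [MetricSpace α] [CompactSpace α]
    {Y : Set α} (hY : IsIndecomposable Y) (hnt : Y.Nontrivial) :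
    ¬ {C : Set α | IsComposant Y C}.Countable := by
  intro hS
  obtain ⟨b, hbc, -, hb⟩ := TopologicalSpace.exists_countable_basis α
  have hYc := hY.1.1.isClosed
  have : Nonempty α := ⟨hnt.nonempty.some⟩
  choose! pt hptY hpt using fun C (hC : C ∈ {C : Set α | IsComposant Y C}) => hC
  have : Countable ↥{C : Set α | IsComposant Y C} := hS.to_subtype
  have : Countable ↥{B ∈ b | (B ∩ Y).Nonempty} := (hbc.mono (sep_subset _ _)).to_subtype
  let F : ↥{C : Set α | IsComposant Y C} × ↥{B ∈ b | (B ∩ Y).Nonempty} → Set α := fun i =>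
    closure (⋃₀ {K | IsContinuum K ∧ K ⊆ Y ∧ pt i.1 ∈ K ∧ Disjoint K i.2.1})
  obtain ⟨⟨⟨C, hC⟩, ⟨B, hBb, hBY⟩⟩, U, hU, hUY, hUF⟩ := exists_open_inter_subset_of_cover
    (F := F) hYc hY.1.2.1 (fun i => isClosed_closure) (by
      intro y hy
      obtain ⟨K, ⟨hK1, hK2, hK3, hpK⟩, hyK⟩ :
          y ∈ composant Y (pt (composant Y y)) := by
        rw [← hpt _ ⟨y, hy, rfl⟩]
        exact mem_composant_self hnt hy
      obtain ⟨r, hrY, hrK⟩ : ∃ r ∈ Y, r ∉ K := by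
        by_contra! h
        exact hK3 (hK2.antisymm h)
      obtain ⟨B, hBb, hrB, hBK⟩ :=
        hb.exists_subset_of_mem_open (u := Kᶜ) hrK hK1.1.isClosed.isOpen_compl
      refine mem_iUnion.2 ⟨⟨⟨composant Y y, ⟨y, hy, rfl⟩⟩, ⟨B, hBb, r, hrB, hrY⟩⟩,
        subset_closure ⟨K, ⟨hK1, hK2, hpK, ?_⟩, hyK⟩⟩
      exact disjoint_left.2 fun x hx hxB => hBK hxB hx)
  have hBo := hb.isOpen hBb
  have hFY : F ⟨⟨C, hC⟩, ⟨B, hBb, hBY⟩⟩ ⊆ Y :=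
    closure_minimal (sUnion_subset fun K hK => hK.2.1) hYc
  refine hY.not_inter_subset (K := F ⟨⟨C, hC⟩, ⟨B, hBb, hBY⟩⟩)
    ⟨isClosed_closure.isCompact, hUY.mono hUF, ?_⟩ hFY ?_ hU hUY hUF
  · exact (isPreconnected_sUnion (pt C) _ (fun K hK => hK.2.2.1)
      fun K hK => hK.1.2.2).closure
  · intro heq
    obtain ⟨r, hrB, hrY⟩ := hBY
    rw [← heq] at hrY
    obtain ⟨x, hxB, K, hK, hxK⟩ := _root_.mem_closure_iff.1 hrY B hBo hrB
    exact disjoint_left.1 hK.2.2.2 hxK hxB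

/-- A closed set `Z` which contains a nonempty open part of `Y` but not all of `Y` has a
disconnected intersection with some proper subcontinuum through `p`. Otherwise
`Z ∩ composant Y p` would be connected, and its closure would be a proper subcontinuum of `Y`
with nonempty interior. -/
lemma IsIndecomposable.exists_disconnected_inter {α : Type*} [MetricSpace α] [CompactSpace α]
    {Y Z D : Set α} {p : α} (hY : IsIndecomposable Y) (hnt : Y.Nontrivial) (hp : p ∈ Y)
    (hZ : IsClosed Z) (hYZ : ¬ Y ⊆ Z) (hD : IsOpen D) (hDY : (D ∩ Y).Nonempty)
    (hDZ : D ∩ Y ⊆ Z) :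
    ∃ Q, IsContinuum Q ∧ Q ⊆ Y ∧ Q ≠ Y ∧ p ∈ Q ∧ ¬ IsPreconnected (Z ∩ Q) := by
  by_contra! hcon
  have hYc := hY.1.1.isClosed
  have hpre : IsPreconnected (Z ∩ composant Y p) := by
    apply isPreconnected_of_forall_pair
    rintro x ⟨hxZ, K, ⟨hK1, hK2, hK3, hpK⟩, hxK⟩ y ⟨hyZ, L, ⟨hL1, hL2, hL3, hpL⟩, hyL⟩
    have h := hY.union_proper ⟨hK1, hK2, hK3⟩ ⟨hL1, hL2, hL3⟩ ⟨p, hpK, hpL⟩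
    refine ⟨Z ∩ (K ∪ L), inter_subset_inter_right _ (subset_sUnion_of_mem
      ⟨h.1, h.2.1, h.2.2, Or.inl hpK⟩), ⟨hxZ, Or.inl hxK⟩, ⟨hyZ, Or.inr hyL⟩, ?_⟩
    exact hcon _ h.1 h.2.1 h.2.2 (Or.inl hpK)
  have hCY : composant Y p ⊆ Y := sUnion_subset fun K hK => hK.2.1
  have hEY : closure (Z ∩ composant Y p) ⊆ Y := closure_minimal (inter_subset_right.trans hCY) hYc
  have hEZ : closure (Z ∩ composant Y p) ⊆ Z := closure_minimal inter_subset_left hZ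
  have hDE : D ∩ Y ⊆ closure (Z ∩ composant Y p) := by
    rintro x ⟨hxD, hxY⟩
    rw [_root_.mem_closure_iff]
    intro O hO hxO
    obtain ⟨z, ⟨hzO, hzD⟩, hzC⟩ := composant_dense hY.1 hnt hp (hO.inter hD) ⟨x, ⟨hxO, hxD⟩, hxY⟩
    exact ⟨z, hzO, hDZ ⟨hzD, hCY hzC⟩, hzC⟩
  exact hY.not_inter_subset ⟨isClosed_closure.isCompact, hDY.mono hDE, hpre.closure⟩ hEY
    (fun h => hYZ (h ▸ hEZ)) hD hDY hDE

/-- A continuum `Z` meeting every composant of `Y` and not containing `Y` can be enlarged within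
`Z ∪ Y` to a continuum which still does not contain `Y` but contains a nonempty open part of it.
The closures of the unions of `Z` with the continua in `Y` which meet `Z` and miss a given basic
open set form a countable cover of `Y`, so one of them works. -/
lemma IsIndecomposable.exists_enlargement {α : Type*} [MetricSpace α] [CompactSpace α]
    {Y Z : Set α} (hY : IsIndecomposable Y) (hZ : IsContinuum Z)
    (hYZ : ¬ Y ⊆ Z) (hmeet : ∀ p ∈ Y, (Z ∩ composant Y p).Nonempty) :
    ∃ Z', IsContinuum Z' ∧ Z ⊆ Z' ∧ Z' ⊆ Z ∪ Y ∧ ¬ Y ⊆ Z' ∧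
      ∃ D, IsOpen D ∧ (D ∩ Y).Nonempty ∧ D ∩ Y ⊆ Z' := by
  obtain ⟨b, hbc, -, hb⟩ := TopologicalSpace.exists_countable_basis α
  have hYc := hY.1.1.isClosed
  have hZc := hZ.1.isClosed
  have : Countable ↥{B ∈ b | (B ∩ Y).Nonempty ∧ Disjoint Z B} :=
    (hbc.mono (sep_subset _ _)).to_subtype
  let F : ↥{B ∈ b | (B ∩ Y).Nonempty ∧ Disjoint Z B} → Set α := fun B =>
    closure (Z ∪ ⋃₀ {K | IsContinuum K ∧ K ⊆ Y ∧ (Z ∩ K).Nonempty ∧ Disjoint K B.1})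
  obtain ⟨⟨B, hBb, hBY, hBZ⟩, U, hU, hUY, hUF⟩ := exists_open_inter_subset_of_cover
    (F := F) hYc hY.1.2.1 (fun i => isClosed_closure) (by
      intro y hy
      obtain ⟨z, hzZ, K, ⟨hK1, hK2, hK3, hyK⟩, hzK⟩ := hmeet y hy
      have hnot : ¬ Y ⊆ K ∪ Z := by
        intro hsub
        obtain ⟨r, hrY, hrZ⟩ := not_subset.1 hYZ
        refine hY.not_inter_subset hK1 hK2 hK3 hZc.isOpen_compl ⟨r, hrZ, hrY⟩ ?_
        rintro x ⟨hxZ, hxY⟩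
        exact (hsub hxY).resolve_right hxZ
      obtain ⟨r, hrY, hrK⟩ := not_subset.1 hnot
      obtain ⟨B, hBb, hrB, hBK⟩ := hb.exists_subset_of_mem_open (u := (K ∪ Z)ᶜ) hrK
        (hK1.1.isClosed.union hZc).isOpen_compl
      refine mem_iUnion.2 ⟨⟨B, hBb, ⟨r, hrB, hrY⟩, ?_⟩,
        subset_closure (Or.inr ⟨K, ⟨hK1, hK2, ⟨z, hzZ, hzK⟩, ?_⟩, hyK⟩)⟩
      · exact disjoint_left.2 fun x hx hxB => hBK hxB (Or.inr hx)
      · exact disjoint_left.2 fun x hx hxB => hBK hxB (Or.inl hx))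
  have hBo := hb.isOpen hBb
  obtain ⟨z0, hz0⟩ := hZ.2.1
  refine ⟨F ⟨B, hBb, hBY, hBZ⟩, ⟨isClosed_closure.isCompact,
    ⟨z0, subset_closure (Or.inl hz0)⟩, ?_⟩, subset_union_left.trans subset_closure, ?_, ?_,
    U, hU, hUY, hUF⟩
  · apply IsPreconnected.closure
    apply isPreconnected_of_forall z0
    rintro y (hy | ⟨K, hK, hyK⟩)
    · exact ⟨Z, subset_union_left, hz0, hy, hZ.2.2⟩
    · exact ⟨Z ∪ K, union_subset_union_right _ (subset_sUnion_of_mem hK), Or.inl hz0, Or.inr hyK,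
        IsPreconnected.union' hK.2.2.1 hZ.2.2 hK.1.2.2⟩
  · exact closure_minimal (union_subset_union_right _ (sUnion_subset fun K hK => hK.2.1))
      (hZc.union hYc)
  · intro hsub
    obtain ⟨r, hrB, hrY⟩ := hBY
    obtain ⟨x, hxB, hx | ⟨K, hK, hxK⟩⟩ := _root_.mem_closure_iff.1 (hsub hrY) B hBo hrB
    · exact disjoint_left.1 hBZ hx hxB
    · exact disjoint_left.1 hK.2.2.2 hxK hxB

/-! ### Continuous logarithms on compact subsets of the plane -/

/-- `f` has a continuous logarithm on `K`. -/
def HasLog (f : ℂ → ℂ) (K : Set ℂ) : Prop :=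
  ∃ g : ℂ → ℂ, ContinuousOn g K ∧ ∀ z ∈ K, Complex.exp (g z) = f z

/-- `K` does not wind around any point off it: every `z ↦ z - c` with `c ∉ K` has a continuous
logarithm on `K`. For compact `K` this amounts to connectedness of the complement. -/
def NoWinding (K : Set ℂ) : Prop := ∀ c ∉ K, HasLog (fun z => z - c) K

lemma HasLog.mono {f : ℂ → ℂ} {K L : Set ℂ} (h : HasLog f K) (hL : L ⊆ K) : HasLog f L := by
  obtain ⟨g, hg, hexp⟩ := h
  exact ⟨g, hg.mono hL, fun z hz => hexp z (hL hz)⟩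

lemma sub_eq_of_re_eq {x y : ℂ} (h : x.re = y.re) :
    x - y = ((x.im - y.im : ℝ) : ℂ) * Complex.I := by
  apply Complex.ext <;> simp [h]

lemma hasLog_sub_of_re_pos {K : Set ℂ} {c w : ℂ} (hw : w ≠ 0)
    (h : ∀ z ∈ K, w * (z - c) ∈ Complex.slitPlane) :
    ∃ g : ℂ → ℂ, ContinuousOn g K ∧ (∀ z ∈ K, Complex.exp (g z) = z - c) ∧
      ∀ z, g z = Complex.log (w * (z - c)) - Complex.log w := by
  refine ⟨fun z => Complex.log (w * (z - c)) - Complex.log w, ?_, ?_, fun z => rfl⟩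
  · exact (ContinuousOn.clog (by fun_prop) h).sub continuousOn_const
  · intro z hz
    simp only
    rw [Complex.exp_sub, Complex.exp_log (Complex.slitPlane_ne_zero (h z hz)),
      Complex.exp_log hw]
    field_simp

/-- Cutting by a half-plane preserves `NoWinding`. -/
lemma NoWinding.inter_halfPlane {K : Set ℂ} (hK : NoWinding K) {w : ℂ} (hw : w ≠ 0) (a : ℝ) :
    NoWinding (K ∩ {z | a ≤ (w * z).re}) := by
  intro c hc
  by_cases hcK : c ∈ K
  · have hca : (w * c).re < a := by
      by_contra! h
      exact hc ⟨hcK, h⟩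
    obtain ⟨g, h1, h2, -⟩ := hasLog_sub_of_re_pos (K := K ∩ {z | a ≤ (w * z).re}) (c := c) hw
      (by
        rintro z ⟨-, hz⟩
        left
        simp only [mem_ofPred_eq] at hz
        rw [mul_sub, Complex.sub_re]
        linarith)
    exact ⟨g, h1, h2⟩
  · exact (hK c hcK).mono inter_subset_left

/-- The jump correction: for `c ∉ K` on the line `Re (w z) = a` there are functions `u`, `v` on the
two sides of the line, with `exp u = exp v = 1`, which agree on the part of the line below `c` and
differ by `2 π i` on the part above. They are differences of the global logarithm of `z - c` and
of two branches, cut inside the opposite half-planes. -/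
lemma exists_jump {K : Set ℂ} {w c : ℂ} {a : ℝ} (hw : w ≠ 0) (hc : (w * c).re = a)
    (hcK : c ∉ K) (hlog : HasLog (fun z => z - c) K) :
    ∃ u v : ℂ → ℂ, ContinuousOn u (K ∩ {z | a ≤ (w * z).re}) ∧
      ContinuousOn v (K ∩ {z | -a ≤ (-w * z).re}) ∧
      (∀ z ∈ K, a ≤ (w * z).re → Complex.exp (u z) = 1) ∧
      (∀ z ∈ K, -a ≤ (-w * z).re → Complex.exp (v z) = 1) ∧
      (∀ z ∈ K, (w * z).re = a → (w * z).im < (w * c).im → u z - v z = 0) ∧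
      (∀ z ∈ K, (w * z).re = a → (w * c).im < (w * z).im →
        u z - v z = 2 * Real.pi * Complex.I) := by
  obtain ⟨l, hl, hlexp⟩ := hlog
  have hzc : ∀ z ∈ K, z - c ≠ 0 := fun z hz h => hcK (by rwa [← sub_eq_zero.1 h])
  have hslit : ∀ x : ℂ, 0 ≤ x.re → x ≠ 0 → x ∈ Complex.slitPlane := by
    intro x hx hx0
    rcases hx.lt_or_eq with h | h
    · exact Or.inl h
    · right
      intro him
      exact hx0 (Complex.ext h.symm him)
  obtain ⟨g, hg, hgexp, hgdef⟩ := hasLog_sub_of_re_pos (K := K ∩ {z | a ≤ (w * z).re}) (c := c) hw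
    (by
      rintro z ⟨hzK, hz⟩
      simp only [mem_ofPred_eq] at hz
      apply hslit _ _ (mul_ne_zero hw (hzc z hzK))
      rw [mul_sub, Complex.sub_re]
      linarith)
  obtain ⟨h, hh, hhexp, hhdef⟩ := hasLog_sub_of_re_pos (K := K ∩ {z | -a ≤ (-w * z).re}) (c := c)
    (neg_ne_zero.2 hw) (by
      rintro z ⟨hzK, hz⟩
      simp only [mem_ofPred_eq] at hz
      apply hslit _ _ (mul_ne_zero (neg_ne_zero.2 hw) (hzc z hzK))
      rw [mul_sub, Complex.sub_re]
      simp only [neg_mul, Complex.neg_re] at hz ⊢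
      linarith)
  -- The constant making the two branches agree below `c`.
  set k : ℂ := -Complex.log w + Complex.log (-w) - Real.pi * Complex.I with hk
  have hkexp : Complex.exp k = 1 := by
    rw [hk, Complex.exp_sub, Complex.exp_add, Complex.exp_neg, Complex.exp_log hw,
      Complex.exp_log (neg_ne_zero.2 hw), Complex.exp_pi_mul_I]
    field_simp
  -- The values of the logarithm on the two halves of the imaginary axis.
  have himag : ∀ t : ℝ, 0 < t → Complex.log (t * Complex.I) - Complex.log (-(t * Complex.I))
      = Real.pi * Complex.I := by
    intro t ht
    rw [← mul_neg, Complex.log_ofReal_mul ht Complex.I_ne_zero,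
      Complex.log_ofReal_mul ht (neg_ne_zero.2 Complex.I_ne_zero), Complex.log_I,
      Complex.log_neg_I]
    ring
  refine ⟨fun z => g z - l z, fun z => h z - l z + k, hg.sub (hl.mono inter_subset_left),
    (hh.sub (hl.mono inter_subset_left)).add continuousOn_const, ?_, ?_, ?_, ?_⟩
  · intro z hzK hz
    simp only
    rw [Complex.exp_sub, hgexp z ⟨hzK, hz⟩, hlexp z hzK, div_self (hzc z hzK)]
  · intro z hzK hz
    simp only
    rw [Complex.exp_add, Complex.exp_sub, hhexp z ⟨hzK, hz⟩, hlexp z hzK, div_self (hzc z hzK),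
      hkexp, one_mul]
  · intro z hzK hz hlt
    have hval : w * (z - c) = -((((w * c).im - (w * z).im : ℝ) : ℂ) * Complex.I) := by
      rw [mul_sub, sub_eq_of_re_eq (hz.trans hc.symm)]
      push_cast
      ring
    have := himag ((w * c).im - (w * z).im) (by linarith)
    simp only [hgdef, hhdef, neg_mul, hval, neg_neg]
    linear_combination -this - hk
  · intro z hzK hz hlt
    have hval : w * (z - c) = ((((w * z).im - (w * c).im : ℝ) : ℂ) * Complex.I) := by
      rw [mul_sub, sub_eq_of_re_eq (hz.trans hc.symm)]
    have := himag ((w * z).im - (w * c).im) (by linarith)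
    simp only [hgdef, hhdef, neg_mul, hval]
    linear_combination this - hk

/-- Logarithms on the two sides of a line can be glued when `K` does not wind around points off
it: their difference on the line is a step function, whose jumps are removed one after the other,
from bottom to top, by `exists_jump`. -/
lemma HasLog.glue {K : Set ℂ} {f : ℂ → ℂ} {w : ℂ} {a : ℝ} (hw : w ≠ 0) (hK : IsCompact K)
    (hKw : NoWinding K) (h1 : HasLog f (K ∩ {z | a ≤ (w * z).re}))
    (h2 : HasLog f (K ∩ {z | -a ≤ (-w * z).re})) : HasLog f K := by
  have hc1 : IsClosed {z : ℂ | a ≤ (w * z).re} := isClosed_le (by fun_prop) (by fun_prop)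
  have hc2 : IsClosed {z : ℂ | -a ≤ (-w * z).re} := isClosed_le (by fun_prop) (by fun_prop)
  have hKcl := hK.isClosed
  obtain ⟨g0, hg0, hg0exp⟩ := h1
  obtain ⟨k0, hk0, hk0exp⟩ := h2
  set E : Set ℂ := K ∩ {z | (w * z).re = a} with hE
  have hE1 : E ⊆ K ∩ {z | a ≤ (w * z).re} := fun z hz => ⟨hz.1, hz.2.ge⟩
  have hE2 : E ⊆ K ∩ {z | -a ≤ (-w * z).re} := fun z hz => ⟨hz.1, by
    have := hz.2
    simp only [mem_ofPred_eq, neg_mul, Complex.neg_re] at this ⊢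
    linarith⟩
  have hEc : IsCompact E :=
    hK.inter_right (isClosed_eq (by fun_prop) (by fun_prop))
  -- Logarithms take equal values up to `2 π i ℤ`, so close values are equal.
  have hdiff : ∀ (g k : ℂ → ℂ), (∀ z ∈ K ∩ {z | a ≤ (w * z).re}, Complex.exp (g z) = f z) →
      (∀ z ∈ K ∩ {z | -a ≤ (-w * z).re}, Complex.exp (k z) = f z) → ∀ z ∈ E, ∃ n : ℤ,
      g z - k z = n * (2 * Real.pi * Complex.I) := by
    intro g k hg hk z hz
    rw [← Complex.exp_eq_one_iff, Complex.exp_sub, hg z (hE1 hz), hk z (hE2 hz), div_self]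
    rw [← hg z (hE1 hz)]
    exact Complex.exp_ne_zero _
  obtain ⟨δ, hδ, hδE⟩ : ∃ δ > 0, ∀ z ∈ E, ∀ z' ∈ E, |(w * z).im - (w * z').im| < δ →
      g0 z - k0 z = g0 z' - k0 z' := by
    have huc := Metric.uniformContinuousOn_iff.1
      (hEc.uniformContinuousOn_of_continuous ((hg0.mono hE1).sub (hk0.mono hE2))) 1 one_pos
    obtain ⟨δ, hδ, hd⟩ := huc
    refine ⟨δ * ‖w‖, by positivity, fun z hz z' hz' hlt => ?_⟩
    have hdist : dist z z' < δ := by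
      have h3 : w * (z - z') = (((w * z).im - (w * z').im : ℝ) : ℂ) * Complex.I := by
        have e1 : (w * z).re = a := hz.2
        have e2 : (w * z').re = a := hz'.2
        rw [mul_sub, sub_eq_of_re_eq (e1.trans e2.symm)]
      have h4 : ‖w‖ * ‖z - z'‖ = |(w * z).im - (w * z').im| := by
        rw [← norm_mul, h3, norm_mul, Complex.norm_I, mul_one, Complex.norm_real,
          Real.norm_eq_abs]
      rw [dist_eq_norm]
      have : 0 < ‖w‖ := norm_pos_iff.2 hw
      nlinarith
    have h5 := hd z hz z' hz' hdist
    obtain ⟨m, hm⟩ := hdiff g0 k0 hg0exp hk0exp z hz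
    obtain ⟨n, hn⟩ := hdiff g0 k0 hg0exp hk0exp z' hz'
    simp only [Pi.sub_apply] at h5
    rw [hm, hn, dist_eq_norm, ← sub_mul, norm_mul] at h5
    have h6 : ‖(2 * Real.pi * Complex.I : ℂ)‖ = 2 * Real.pi := by
      simp [abs_of_pos Real.pi_pos]
    rw [h6, ← Int.cast_sub, Complex.norm_intCast] at h5
    have h7 : |((m - n : ℤ) : ℝ)| < 1 := by
      have := abs_nonneg ((m - n : ℤ) : ℝ)
      nlinarith [Real.pi_gt_three]
    have h8 : m - n = 0 := by
      rw [← Int.abs_lt_one_iff]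
      exact_mod_cast h7
    rw [hm, hn, sub_eq_zero.1 h8]
  obtain ⟨R, hR⟩ : ∃ R : ℝ, ∀ z ∈ E, |(w * z).im| ≤ R := by
    obtain ⟨R, hR⟩ := hEc.exists_bound_of_continuousOn (f := fun z => (w * z).im) (by fun_prop)
    exact ⟨R, hR⟩
  -- After `n` steps the logarithms agree up to height `-R - 1 + n * (δ / 2)`.
  have main : ∀ n : ℕ, ∃ (g k : ℂ → ℂ) (m : ℂ), ContinuousOn g (K ∩ {z | a ≤ (w * z).re}) ∧
      ContinuousOn k (K ∩ {z | -a ≤ (-w * z).re}) ∧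
      (∀ z ∈ K ∩ {z | a ≤ (w * z).re}, Complex.exp (g z) = f z) ∧
      (∀ z ∈ K ∩ {z | -a ≤ (-w * z).re}, Complex.exp (k z) = f z) ∧
      (∀ z ∈ E, (w * z).im ≤ -R - 1 + n * (δ / 2) → g z = k z) ∧
      (∀ z ∈ E, -R - 1 + n * (δ / 2) ≤ (w * z).im → g z - k z = g0 z - k0 z + m) := by
    intro n
    induction n with
    | zero =>
      refine ⟨g0, k0, 0, hg0, hk0, hg0exp, hk0exp, fun z hz hle => ?_, fun z _ _ => by simp⟩
      have := (abs_le.1 (hR z hz)).1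
      simp only [Nat.cast_zero, zero_mul] at hle
      linarith
    | succ n ih =>
      obtain ⟨g, k, m, hg, hk, hgexp, hkexp, hlow, hhigh⟩ := ih
      set t : ℝ := -R - 1 + n * (δ / 2) with ht
      have ht' : -R - 1 + ((n + 1 : ℕ) : ℝ) * (δ / 2) = t + δ / 2 := by
        rw [ht]; push_cast; ring
      rw [ht']
      by_cases hex : ∃ z ∈ E, t ≤ (w * z).im ∧ (w * z).im ≤ t + δ / 2 ∧ g z - k z ≠ 0
      · obtain ⟨z1, hz1, hz1t, hz1t', hne⟩ := hex
        obtain ⟨N, hN⟩ := hdiff g k hgexp hkexp z1 hz1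
        have hsame : ∀ z ∈ E, t ≤ (w * z).im → (w * z).im ≤ t + δ / 2 →
            g z - k z = N * (2 * Real.pi * Complex.I) := by
          intro z hz hzt hzt'
          rw [← hN, hhigh z hz hzt, hhigh z1 hz1 hz1t, hδE z hz z1 hz1]
          rw [abs_lt]
          constructor <;> linarith
        have hcw : w * ((a + t * Complex.I) / w) = a + t * Complex.I := by field_simp
        have hcre : (w * ((a + t * Complex.I) / w)).re = a := by rw [hcw]; simp
        have hcim : (w * ((a + t * Complex.I) / w)).im = t := by rw [hcw]; simp
        have hcK : ((a + t * Complex.I) / w : ℂ) ∉ K := by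
          intro hcK
          have h3 := hsame _ ⟨hcK, hcre⟩ hcim.ge (by rw [hcim]; linarith)
          rw [hlow _ ⟨hcK, hcre⟩ hcim.le, sub_self] at h3
          rw [← h3] at hN
          exact hne hN
        obtain ⟨u, v, hu, hv, huexp, hvexp, hbelow, habove⟩ :=
          exists_jump hw hcre hcK (hKw _ hcK)
        rw [hcim] at hbelow habove
        refine ⟨fun z => g z - N * u z, fun z => k z - N * v z,
          m - N * (2 * Real.pi * Complex.I), hg.sub (continuousOn_const.mul hu),
          hk.sub (continuousOn_const.mul hv), ?_, ?_, ?_, ?_⟩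
        · intro z hz
          simp only
          rw [Complex.exp_sub, hgexp z hz, Complex.exp_int_mul, huexp z hz.1 hz.2, one_zpow,
            div_one]
        · intro z hz
          simp only
          rw [Complex.exp_sub, hkexp z hz, Complex.exp_int_mul, hvexp z hz.1 hz.2, one_zpow,
            div_one]
        · intro z hz hle
          have hzt : (w * z).im ≠ t := by
            intro heq
            apply hcK
            have : (a + t * Complex.I) / w = z := by
              have e1 : (w * z).re = a := hz.2
              rw [div_eq_iff hw, mul_comm z w, ← Complex.re_add_im (w * z), e1, heq]
            rw [this]
            exact hz.1
          rcases lt_or_gt_of_ne hzt with hlt | hgt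
          · have e := hbelow z hz.1 hz.2 hlt
            have e' := hlow z hz hlt.le
            linear_combination e' - N * e
          · have e := habove z hz.1 hz.2 hgt
            have e' := hsame z hz hgt.le hle
            linear_combination e' - N * e
        · intro z hz hle
          have e := habove z hz.1 hz.2 (by linarith)
          have e' := hhigh z hz (by linarith)
          linear_combination e' - N * e
      · push Not at hex
        refine ⟨g, k, m, hg, hk, hgexp, hkexp, fun z hz hle => ?_, fun z hz hle =>
          hhigh z hz (by linarith)⟩
        rcases le_total (w * z).im t with h | h
        · exact hlow z hz h
        · exact sub_eq_zero.1 (hex z hz h hle)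
  obtain ⟨n, hn⟩ := exists_nat_gt ((2 * R + 1) / (δ / 2))
  rw [div_lt_iff₀ (by positivity)] at hn
  obtain ⟨g, k, m, hg, hk, hgexp, hkexp, hlow, -⟩ := main n
  classical
  have hEq2 : EqOn (fun z => if a ≤ (w * z).re then g z else k z) k
      (K ∩ {z | -a ≤ (-w * z).re}) := by
    rintro z ⟨hzK, hz⟩
    simp only [mem_ofPred_eq, neg_mul, Complex.neg_re] at hz
    by_cases h : a ≤ (w * z).re
    · simp only [h, if_true]
      have hzE : z ∈ E := ⟨hzK, le_antisymm (by linarith) h⟩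
      exact hlow z hzE (by linarith [(abs_le.1 (hR z hzE)).2])
    · simp only [h, if_false]
  have hEq1 : EqOn (fun z => if a ≤ (w * z).re then g z else k z) g
      (K ∩ {z | a ≤ (w * z).re}) := fun z hz => if_pos hz.2
  have hcov : K = (K ∩ {z | a ≤ (w * z).re}) ∪ (K ∩ {z | -a ≤ (-w * z).re}) := by
    ext z
    simp only [mem_union, mem_inter_iff, mem_ofPred_eq, neg_mul, Complex.neg_re]
    constructor
    · intro hz
      rcases le_total a (w * z).re with h | h
      · exact Or.inl ⟨hz, h⟩
      · exact Or.inr ⟨hz, by linarith⟩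
    · rintro (h | h) <;> exact h.1
  refine ⟨fun z => if a ≤ (w * z).re then g z else k z, ?_, ?_⟩
  · rw [hcov]
    exact (hg.congr hEq1).union_of_isClosed (hk.congr hEq2) (hKcl.inter hc1) (hKcl.inter hc2)
  · intro z hz
    rw [hcov] at hz
    rcases hz with hz | hz
    · rw [hEq1 hz, hgexp z hz]
    · rw [hEq2 hz, hkexp z hz]

/-- If all thin slices of `K` orthogonal to a direction have logarithms of `f`, so has `K`. -/
lemma HasLog.of_slices {K : Set ℂ} {f : ℂ → ℂ} {w : ℂ} {δ : ℝ} (hw : w ≠ 0) (hδ : 0 < δ)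
    (hK : IsCompact K) (hKw : NoWinding K)
    (h : ∀ L ⊆ K, IsCompact L → NoWinding L →
      (∃ b, ∀ z ∈ L, b ≤ (w * z).re ∧ (w * z).re ≤ b + δ) → HasLog f L) : HasLog f K := by
  have main : ∀ n : ℕ, ∀ L ⊆ K, IsCompact L → NoWinding L →
      (∃ b, ∀ z ∈ L, b ≤ (w * z).re ∧ (w * z).re ≤ b + (n + 1) * δ) → HasLog f L := by
    intro n
    induction n with
    | zero =>
      rintro L hL hLc hLw ⟨b, hb⟩
      exact h L hL hLc hLw ⟨b, by simpa using hb⟩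
    | succ n ih =>
      rintro L hL hLc hLw ⟨b, hb⟩
      have hc1 : IsClosed {z : ℂ | b + δ ≤ (w * z).re} := isClosed_le (by fun_prop) (by fun_prop)
      have hc2 : IsClosed {z : ℂ | -(b + δ) ≤ (-w * z).re} :=
        isClosed_le (by fun_prop) (by fun_prop)
      refine HasLog.glue (a := b + δ) hw hLc hLw
        (ih _ (inter_subset_left.trans hL) (hLc.inter_right hc1) (hLw.inter_halfPlane hw _)
          ⟨b + δ, ?_⟩)
        (h _ (inter_subset_left.trans hL) (hLc.inter_right hc2)
          (hLw.inter_halfPlane (neg_ne_zero.2 hw) _) ⟨b, ?_⟩)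
      · rintro z ⟨hz, hz'⟩
        refine ⟨hz', (hb z hz).2.trans ?_⟩
        push_cast
        linarith
      · rintro z ⟨hz, hz'⟩
        simp only [mem_ofPred_eq, neg_mul, Complex.neg_re] at hz'
        exact ⟨(hb z hz).1, by linarith⟩
  obtain ⟨R, hR⟩ := hK.exists_bound_of_continuousOn (f := fun z => (w * z).re) (by fun_prop)
  obtain ⟨n, hn⟩ := exists_nat_gt (2 * R / δ)
  rw [div_lt_iff₀ hδ] at hn
  refine main n K subset_rfl hK hKw ⟨-R, fun z hz => ?_⟩
  have := abs_le.1 (hR z hz)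
  exact ⟨this.1, by nlinarith [this.2]⟩

/-- Eilenberg's criterion: on a compact set winding around no point off it, every
continuous nowhere vanishing function has a continuous logarithm. -/
lemma NoWinding.hasLog {K : Set ℂ} {f : ℂ → ℂ} (hK : IsCompact K) (hKw : NoWinding K)
    (hf : ContinuousOn f K) (hf0 : ∀ z ∈ K, f z ≠ 0) : HasLog f K := by
  obtain ⟨ε, hε, hεf⟩ : ∃ ε > 0, ∀ z ∈ K, ε ≤ ‖f z‖ := by
    rcases K.eq_empty_or_nonempty with rfl | hne
    · exact ⟨1, one_pos, by simp⟩
    · obtain ⟨x, hx, hmin⟩ := hK.exists_isMinOn hne hf.norm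
      exact ⟨‖f x‖, norm_pos_iff.2 (hf0 x hx), fun z hz => hmin hz⟩
  obtain ⟨δ, hδ, hd⟩ := Metric.uniformContinuousOn_iff.1
    (hK.uniformContinuousOn_of_continuous hf) ε hε
  refine HasLog.of_slices (w := 1) (δ := δ / 3) one_ne_zero (by positivity) hK hKw ?_
  rintro L hL hLc hLw ⟨b, hb⟩
  refine HasLog.of_slices (w := Complex.I) (δ := δ / 3) Complex.I_ne_zero (by positivity) hLc hLw ?_
  rintro M hM hMc hMw ⟨b', hb'⟩
  rcases M.eq_empty_or_nonempty with rfl | ⟨x, hx⟩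
  · exact ⟨0, continuousOn_empty _, by simp⟩
  -- On a set of diameter less than `δ` the quotient `f z / f x` stays in the unit disc about `1`.
  have hslit : ∀ z ∈ M, f z / f x ∈ Complex.slitPlane := by
    intro z hz
    have h1 := hb z (hM hz)
    have h2 := hb x (hM hx)
    have h3 := hb' z hz
    have h4 := hb' x hx
    simp only [one_mul, Complex.mul_re, Complex.I_re, Complex.I_im, zero_mul, zero_sub]
      at h1 h2 h3 h4
    have hdist : dist z x < δ := by
      rw [dist_eq_norm]
      refine (Complex.norm_le_abs_re_add_abs_im _).trans_lt ?_
      have e1 : |(z - x).re| ≤ δ / 3 := by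
        rw [Complex.sub_re, abs_le]; constructor <;> linarith
      have e2 : |(z - x).im| ≤ δ / 3 := by
        rw [Complex.sub_im, abs_le]; constructor <;> linarith
      linarith
    have h5 := hd z (hL (hM hz)) x (hL (hM hx)) hdist
    have hx0 := hf0 x (hL (hM hx))
    have h6 : ‖f z / f x - 1‖ < 1 := by
      rw [div_sub_one hx0, norm_div, div_lt_one (norm_pos_iff.2 hx0), ← dist_eq_norm]
      exact h5.trans_le (hεf x (hL (hM hx)))
    have h7 := Complex.mem_slitPlane_of_norm_lt_one h6
    have h8 : 1 + (f z / f x - 1) = f z / f x := by ring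
    rwa [h8] at h7
  refine ⟨fun z => Complex.log (f z / f x) + Complex.log (f x), ?_, ?_⟩
  · exact (ContinuousOn.clog ((hf.mono (hM.trans hL)).div_const _) hslit).add continuousOn_const
  · intro z hz
    have hx0 := hf0 x (hL (hM hx))
    simp only
    rw [Complex.exp_add, Complex.exp_log (Complex.slitPlane_ne_zero (hslit z hz)),
      Complex.exp_log hx0]
    field_simp

/-- A continuous function on a preconnected set with values in `2 π i ℤ` is constant. -/
lemma eq_of_exp_eq {S : Set ℂ} (hS : IsPreconnected S) {g : ℂ → ℂ} (hg : ContinuousOn g S)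
    (hexp : ∀ z ∈ S, Complex.exp (g z) = 1) {x y : ℂ} (hx : x ∈ S) (hy : y ∈ S) : g x = g y := by
  have hc : (g '' S).Countable := by
    refine (countable_range fun n : ℤ => (n : ℂ) * (2 * Real.pi * Complex.I)).mono ?_
    rintro _ ⟨z, hz, rfl⟩
    obtain ⟨n, hn⟩ := Complex.exp_eq_one_iff.1 (hexp z hz)
    exact ⟨n, hn.symm⟩
  exact hc.isTotallyDisconnected _ subset_rfl (hS.image g hg) ⟨x, hx, rfl⟩ ⟨y, hy, rfl⟩

/-- If the intersection of two continua `A`, `B` in the plane is disconnected, `A ∪ B` winds around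
some point. If `φ` separates two pieces of `A ∩ B`, the function equal to `exp (2 π i φ)` on `A`
and to `1` on `B` has no logarithm. -/
lemma not_noWinding_union {A B : Set ℂ} (hA : IsCompact A) (hB : IsCompact B)
    (hAc : IsPreconnected A) (hBc : IsPreconnected B) (hAB : ¬ IsPreconnected (A ∩ B)) :
    ¬ NoWinding (A ∪ B) := by
  intro hw
  rw [isPreconnected_closed_iff] at hAB
  push Not at hAB
  obtain ⟨s, t, hs, ht, hcov, ⟨p, hp, hps⟩, ⟨r, hr, hrt⟩, hdis⟩ := hAB
  have hABc : IsClosed (A ∩ B) := hA.isClosed.inter hB.isClosed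
  obtain ⟨φ, h0, h1, -⟩ := exists_continuous_zero_one_of_isClosed (hABc.inter hs) (hABc.inter ht)
    (disjoint_left.2 fun x hx hx' => by
      have : x ∈ A ∩ B ∩ (s ∩ t) := ⟨hx.1, hx.2, hx'.2⟩
      rw [hdis] at this
      exact this)
  classical
  set f : ℂ → ℂ := fun z => if z ∈ A then Complex.exp (φ z * (2 * Real.pi * Complex.I)) else 1
    with hf
  have hfA : EqOn f (fun z => Complex.exp (φ z * (2 * Real.pi * Complex.I))) A :=
    fun z hz => if_pos hz
  have hfB : EqOn f (fun _ => 1) B := by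
    intro z hz
    by_cases hzA : z ∈ A
    · rw [hfA hzA]
      rcases hcov ⟨hzA, hz⟩ with h | h
      · simp [h0 ⟨⟨hzA, hz⟩, h⟩]
      · simp [h1 ⟨⟨hzA, hz⟩, h⟩, Complex.exp_two_pi_mul_I]
    · exact if_neg hzA
  have hcA : ContinuousOn (fun z => ((φ z : ℝ) : ℂ) * (2 * Real.pi * Complex.I)) A := by
    fun_prop
  obtain ⟨g, hg, hgexp⟩ := NoWinding.hasLog (f := f) (hA.union hB) hw
    ((hcA.cexp.congr hfA).union_of_isClosed (continuousOn_const.congr hfB) hA.isClosed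
      hB.isClosed) (by
      rintro z (hz | hz)
      · rw [hfA hz]; exact Complex.exp_ne_zero _
      · rw [hfB hz]; exact one_ne_zero)
  have e1 := eq_of_exp_eq hAc (g := fun z => g z - φ z * (2 * Real.pi * Complex.I))
    ((hg.mono subset_union_left).sub hcA) (fun z hz => by
      rw [Complex.exp_sub, hgexp z (Or.inl hz), hfA hz, div_self (Complex.exp_ne_zero _)])
    hp.1 hr.1
  have e2 := eq_of_exp_eq hBc (hg.mono subset_union_right) (fun z hz => by
      rw [hgexp z (Or.inr hz), hfB hz]) hp.2 hr.2
  have e3 : φ p = 0 := h0 ⟨hp, hps⟩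
  have e4 : φ r = 1 := h1 ⟨hr, hrt⟩
  simp only [e3, e4, e2, Complex.ofReal_zero, Complex.ofReal_one, zero_mul, one_mul, sub_zero] at e1
  exact Complex.two_pi_I_ne_zero (by linear_combination e1)

/-- The points off a compact set `K` around which `K` winds form a bounded open set with frontier
in `K`. -/
lemma exists_bounded_open_of_not_noWinding {K : Set ℂ} (hK : IsCompact K) (h : ¬ NoWinding K) :
    ∃ G : Set ℂ, IsOpen G ∧ G.Nonempty ∧ Disjoint G K ∧ IsCompact (G ∪ K) := by
  have hKc := hK.isClosed
  -- Moving `c` within a disc missing `K` does not affect the existence of a logarithm.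
  have hmove : ∀ c c' : ℂ, c ∉ K → (∀ z ∈ K, ‖c' - c‖ < ‖z - c‖) →
      (HasLog (fun z => z - c') K ↔ HasLog (fun z => z - c) K) := by
    intro c c' hc hd
    have hne : ∀ z ∈ K, z - c ≠ 0 := fun z hz h0 => hc (by rwa [← sub_eq_zero.1 h0])
    have hslit : ∀ z ∈ K, (z - c') / (z - c) ∈ Complex.slitPlane := by
      intro z hz
      have h1 : ‖(c - c') / (z - c)‖ < 1 := by
        rw [norm_div, div_lt_one (norm_pos_iff.2 (hne z hz)), norm_sub_rev]
        exact hd z hz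
      have h2 := Complex.mem_slitPlane_of_norm_lt_one h1
      have h3 : 1 + (c - c') / (z - c) = (z - c') / (z - c) := by
        have := hne z hz
        field_simp
        ring
      rwa [h3] at h2
    have hcont : ContinuousOn (fun z => Complex.log ((z - c') / (z - c))) K :=
      ContinuousOn.clog (ContinuousOn.div (by fun_prop) (by fun_prop) hne) hslit
    have hne' : ∀ z ∈ K, z - c' ≠ 0 := fun z hz h0 =>
      Complex.slitPlane_ne_zero (hslit z hz) (by rw [h0, zero_div])
    constructor
    · rintro ⟨g, hg, hgexp⟩
      refine ⟨_, hg.sub hcont, fun z hz => ?_⟩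
      simp only [Pi.sub_apply]
      rw [Complex.exp_sub, hgexp z hz, Complex.exp_log (Complex.slitPlane_ne_zero (hslit z hz))]
      have h1 := hne z hz
      have h2 := hne' z hz
      field_simp
    · rintro ⟨g, hg, hgexp⟩
      refine ⟨_, hg.add hcont, fun z hz => ?_⟩
      simp only [Pi.add_apply]
      rw [Complex.exp_add, hgexp z hz, Complex.exp_log (Complex.slitPlane_ne_zero (hslit z hz))]
      have h1 := hne z hz
      field_simp
  have hnear : ∀ c ∉ K, ∃ ε > 0, ∀ c' ∈ ball c ε, c' ∉ K ∧
      (HasLog (fun z => z - c') K ↔ HasLog (fun z => z - c) K) := by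
    intro c hc
    obtain ⟨ε, hε, hb⟩ := Metric.isOpen_iff.1 hKc.isOpen_compl c hc
    refine ⟨ε, hε, fun c' hc' => ⟨hb hc', hmove c c' hc fun z hz => ?_⟩⟩
    by_contra! hle
    refine hb (?_ : z ∈ ball c ε) hz
    rw [mem_ball, dist_eq_norm] at hc' ⊢
    exact hle.trans_lt hc'
  obtain ⟨R, hR⟩ := hK.exists_bound_of_continuousOn (f := fun z => z) (by fun_prop)
  have hfar : ∀ c : ℂ, R < ‖c‖ → HasLog (fun z => z - c) K := by
    intro c hc
    by_cases hne : K.Nonempty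
    swap
    · rw [not_nonempty_iff_eq_empty.1 hne]
      exact ⟨0, continuousOn_empty _, by simp⟩
    have hc0 : c ≠ 0 := by
      rintro rfl
      obtain ⟨x, hx⟩ := hne
      rw [norm_zero] at hc
      linarith [norm_nonneg x, hR x hx]
    obtain ⟨g, h1, h2, -⟩ := hasLog_sub_of_re_pos (K := K) (c := c) (w := -c⁻¹)
      (neg_ne_zero.2 (inv_ne_zero hc0)) (by
        intro z hz
        have h1 : ‖-(z / c)‖ < 1 := by
          rw [norm_neg, norm_div, div_lt_one (norm_pos_iff.2 hc0)]
          exact (hR z hz).trans_lt hc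
        have h2 := Complex.mem_slitPlane_of_norm_lt_one h1
        have h3 : 1 + -(z / c) = -c⁻¹ * (z - c) := by
          field_simp
          ring
        rwa [h3] at h2)
    exact ⟨g, h1, h2⟩
  refine ⟨{c | c ∉ K ∧ ¬ HasLog (fun z => z - c) K}, ?_, ?_, ?_, ?_⟩
  · rw [Metric.isOpen_iff]
    rintro c ⟨hc, hlog⟩
    obtain ⟨ε, hε, hn⟩ := hnear c hc
    exact ⟨ε, hε, fun c' hc' => ⟨(hn c' hc').1, fun h => hlog ((hn c' hc').2.1 h)⟩⟩
  · unfold NoWinding at h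
    push Not at h
    obtain ⟨c, hc, hlog⟩ := h
    exact ⟨c, hc, hlog⟩
  · exact disjoint_left.2 fun c hc hcK => hc.1 hcK
  · apply Metric.isCompact_of_isClosed_isBounded
    · rw [← isOpen_compl_iff, Metric.isOpen_iff]
      intro c hc
      simp only [mem_compl_iff, mem_union, mem_ofPred_eq, not_or, not_and, not_not] at hc
      obtain ⟨ε, hε, hn⟩ := hnear c hc.2
      refine ⟨ε, hε, fun c' hc' => ?_⟩
      simp only [mem_compl_iff, mem_union, mem_ofPred_eq, not_or, not_and, not_not]
      exact ⟨fun _ => (hn c' hc').2.2 (hc.1 hc.2), (hn c' hc').1⟩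
    · refine (Metric.isBounded_closedBall (x := (0 : ℂ)) (r := R)).subset ?_
      rintro c (hc | hc)
      · rw [mem_closedBall, dist_zero_right]
        by_contra! hlt
        exact hc.2 (hfar c hlt)
      · rw [mem_closedBall, dist_zero_right]
        exact hR c hc

/-! ### Janiszewski's theorem on the sphere -/

/-- Stereographic projection from `w`, as a pair of mutually inverse maps between `S2 \ {w}` and
the complex plane. -/
lemma exists_stereographic (w : S2) : ∃ (φ : S2 → ℂ) (ψ : ℂ → S2), ContinuousOn φ {w}ᶜ ∧
    Continuous ψ ∧ (∀ x, x ≠ w → ψ (φ x) = x) ∧ (∀ z, φ (ψ z) = z) ∧ ∀ z, ψ z ≠ w := by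
  have hf : Fact (Module.finrank ℝ (EuclideanSpace ℝ (Fin 3)) = 2 + 1) := ⟨by simp⟩
  let e := stereographic' 2 w
  let l := Complex.orthonormalBasisOneI.repr
  have hsrc : e.source = {w}ᶜ := stereographic'_source w
  have htgt : e.target = univ := stereographic'_target w
  refine ⟨fun x => l.symm (e x), fun z => e.symm (l z), ?_, ?_, ?_, ?_, ?_⟩
  · rw [← hsrc]
    exact l.symm.continuous.comp_continuousOn e.continuousOn
  · have := e.continuousOn_symm
    rw [htgt, continuousOn_univ] at this
    exact this.comp l.continuous
  · intro x hx
    have hx' : x ∈ e.source := by rw [hsrc]; exact hx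
    simp only [LinearIsometryEquiv.apply_symm_apply]
    exact e.left_inv hx'
  · intro z
    have hz : l z ∈ e.target := by rw [htgt]; trivial
    simp only [e.right_inv hz, LinearIsometryEquiv.symm_apply_apply]
  · intro z
    have hz : l z ∈ e.target := by rw [htgt]; trivial
    have := e.map_target hz
    rw [hsrc] at this
    exact this

/-- Janiszewski's theorem: if two continua `A`, `B` in the sphere missing `w` have a disconnected
intersection, then some nonempty open set off `A ∪ B`, not containing `w`, is relatively closed in
the complement of `A ∪ B`. -/
lemma exists_open_of_disconnected_inter {A B : Set S2} {w : S2} (hA : IsClosed A)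
    (hB : IsClosed B) (hAc : IsPreconnected A) (hBc : IsPreconnected B) (hwA : w ∉ A)
    (hwB : w ∉ B) (hAB : ¬ IsPreconnected (A ∩ B)) :
    ∃ G : Set S2, IsOpen G ∧ G.Nonempty ∧ Disjoint G (A ∪ B) ∧ IsClosed (G ∪ (A ∪ B)) ∧
      w ∉ G := by
  obtain ⟨φ, ψ, hφ, hψ, hψφ, hφψ, hψw⟩ := exists_stereographic w
  have hpre : ∀ S : Set S2, w ∉ S → φ '' S = ψ ⁻¹' S := by
    intro S hS
    ext z
    constructor
    · rintro ⟨x, hx, rfl⟩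
      rw [mem_preimage, hψφ x (by rintro rfl; exact hS hx)]
      exact hx
    · intro hz
      exact ⟨ψ z, hz, hφψ z⟩
  have himg : ∀ S : Set S2, w ∉ S → ψ '' (ψ ⁻¹' S) = S := by
    intro S hS
    rw [← hpre S hS]
    ext x
    constructor
    · rintro ⟨_, ⟨y, hy, rfl⟩, rfl⟩
      rwa [hψφ y (by rintro rfl; exact hS hy)]
    · intro hx
      exact ⟨φ x, ⟨x, hx, rfl⟩, hψφ x (by rintro rfl; exact hS hx)⟩
  have hsub : ∀ S : Set S2, w ∉ S → S ⊆ {w}ᶜ := fun S hS x hx hxw => hS (hxw ▸ hx)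
  have hcomp : ∀ S : Set S2, w ∉ S → IsClosed S → IsCompact (ψ ⁻¹' S) := by
    intro S hS hcl
    rw [← hpre S hS]
    exact hcl.isCompact.image_of_continuousOn (hφ.mono (hsub S hS))
  have hconn : ∀ S : Set S2, w ∉ S → IsPreconnected S → IsPreconnected (ψ ⁻¹' S) := by
    intro S hS hc
    rw [← hpre S hS]
    exact hc.image φ (hφ.mono (hsub S hS))
  have hnot : ¬ IsPreconnected (ψ ⁻¹' A ∩ ψ ⁻¹' B) := by
    intro h
    rw [← preimage_inter] at h
    have := h.image ψ hψ.continuousOn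
    rw [himg _ (fun h => hwA h.1)] at this
    exact hAB this
  have hwAB : w ∉ A ∪ B := by
    rintro (h | h)
    exacts [hwA h, hwB h]
  obtain ⟨G, hGo, hGne, hGd, hGc⟩ := exists_bounded_open_of_not_noWinding
    ((hcomp A hwA hA).union (hcomp B hwB hB))
    (not_noWinding_union (hcomp A hwA hA) (hcomp B hwB hB) (hconn A hwA hAc) (hconn B hwB hBc)
      hnot)
  refine ⟨ψ '' G, ?_, hGne.image ψ, ?_, ?_, ?_⟩
  · have : ψ '' G = {w}ᶜ ∩ φ ⁻¹' G := by
      ext x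
      constructor
      · rintro ⟨z, hz, rfl⟩
        exact ⟨hψw z, by rwa [mem_preimage, hφψ]⟩
      · rintro ⟨hx, hxG⟩
        exact ⟨φ x, hxG, hψφ x hx⟩
    rw [this]
    exact hφ.isOpen_inter_preimage isOpen_compl_singleton hGo
  · rw [disjoint_left]
    rintro _ ⟨z, hz, rfl⟩ h
    exact disjoint_left.1 hGd hz h
  · have := (hGc.image hψ).isClosed
    rwa [image_union, ← preimage_union, himg _ hwAB] at this
  · rintro ⟨z, -, hz⟩
    exact hψw z hz

/-! ### Filling in the complementary components of a continuum -/

lemma preconnectedSpace_S2 : PreconnectedSpace S2 := by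
  have h : IsPreconnected (Metric.sphere (0 : EuclideanSpace ℝ (Fin 3)) 1) := by
    apply isPreconnected_sphere
    rw [← Module.finrank_eq_rank]
    simp
  exact isPreconnected_iff_preconnectedSpace.1 h

lemma locallyConnectedSpace_S2 : LocallyConnectedSpace S2 := by
  have hf : Fact (Module.finrank ℝ (EuclideanSpace ℝ (Fin 3)) = 2 + 1) := ⟨by simp⟩
  exact ChartedSpace.locallyConnectedSpace (EuclideanSpace ℝ (Fin 2)) S2

/-- The complement of a component of the complement of a closed connected set is connected. -/
lemma isPreconnected_compl_component {α : Type*} [TopologicalSpace α] [PreconnectedSpace α]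
    [LocallyConnectedSpace α] {Z : Set α} (hZ : IsClosed Z) (hZc : IsPreconnected Z) {w : α}
    (hw : w ∉ Z) : IsPreconnected (connectedComponentIn Zᶜ w)ᶜ := by
  set O := connectedComponentIn Zᶜ w with hO
  have hwO : w ∈ O := mem_connectedComponentIn hw
  have hOo : IsOpen O := hZ.isOpen_compl.connectedComponentIn
  have hOZ : O ⊆ Zᶜ := connectedComponentIn_subset _ _
  have hcl : closure O ⊆ O ∪ Z := by
    intro x hx
    by_cases hxZ : x ∈ Z
    · exact Or.inr hxZ
    · left
      have hpc : IsPreconnected (closure O ∩ Zᶜ) :=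
        isPreconnected_connectedComponentIn.subset_closure
          (subset_inter subset_closure hOZ) inter_subset_left
      exact hpc.subset_connectedComponentIn ⟨subset_closure hwO, hw⟩ inter_subset_right ⟨hx, hxZ⟩
  -- A closed piece `d` of the complement of `O` which is separated from the piece `c` containing
  -- `Z` is clopen.
  have key : ∀ c d : Set α, IsClosed c → IsClosed d → Oᶜ ⊆ c ∪ d → Oᶜ ∩ (c ∩ d) = ∅ → Z ⊆ c →
      Oᶜ ∩ d = ∅ := by
    intro c d hc hd hcov hdis hZc
    have hcompl : (Oᶜ ∩ d)ᶜ = closure O ∪ (Oᶜ ∩ c) := by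
      ext x
      constructor
      · intro hx
        by_cases hxO : x ∈ O
        · exact Or.inl (subset_closure hxO)
        · rcases hcov hxO with h | h
          · exact Or.inr ⟨hxO, h⟩
          · exact absurd ⟨hxO, h⟩ hx
      · rintro (hx | hx) ⟨hxO, hxd⟩
        · have hxZ : x ∈ Z := (hcl hx).resolve_left hxO
          have : x ∈ Oᶜ ∩ (c ∩ d) := ⟨hxO, hZc hxZ, hxd⟩
          rw [hdis] at this
          exact this
        · have : x ∈ Oᶜ ∩ (c ∩ d) := ⟨hxO, hx.2, hxd⟩
          rw [hdis] at this
          exact this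
    have hclopen : IsClopen (Oᶜ ∩ d) := by
      refine ⟨hOo.isClosed_compl.inter hd, ?_⟩
      rw [← isClosed_compl_iff, hcompl]
      exact isClosed_closure.union (hOo.isClosed_compl.inter hc)
    rcases isClopen_iff.1 hclopen with h | h
    · exact h
    · have : w ∈ Oᶜ ∩ d := h ▸ mem_univ w
      exact absurd hwO this.1
  rw [isPreconnected_closed_iff]
  rintro c d hc hd hcov ⟨x, hx, hxc⟩ ⟨y, hy, hyd⟩
  by_contra hne
  rw [not_nonempty_iff_eq_empty] at hne
  have hZO : Z ⊆ Oᶜ := fun x hx hxO => hOZ hxO hx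
  have hZd : Z ∩ (c ∩ d) = ∅ := subset_eq_empty (inter_subset_inter_left _ hZO) hne
  rcases (isPreconnected_iff_subset_of_disjoint_closed.1 hZc) c d hc hd (hZO.trans hcov) hZd with
    h | h
  · have := key c d hc hd hcov hne h
    exact (this ▸ (⟨hy, hyd⟩ : y ∈ Oᶜ ∩ d) : y ∈ (∅ : Set α))
  · have := key d c hd hc (by rwa [union_comm]) (by rwa [inter_comm d c]) h
    exact (this ▸ (⟨hx, hxc⟩ : x ∈ Oᶜ ∩ c) : x ∈ (∅ : Set α))

/-! ### Disjoint open sets carved out by different composants -/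

/-- Let `X ⊆ S²` be a nonseparating continuum and `Y` an indecomposable continuum
contained in the boundary of `X`. If a subcontinuum `Z` of `X` intersects an
internal composant of `Y`, then `Z ⊆ Y` or `Y ⊆ Z`. -/
theorem subcontinuum_meeting_internal_composant
    (X Y Z : Set S2) (hX : IsContinuum X) (hXns : ¬ Separates X)
    (hY : IsIndecomposable Y) (hYX : Y ⊆ frontier X)
    (hZ : IsContinuum Z) (hZX : Z ⊆ X)
    (C : Set S2) (hC : IsInternalComposant Y C) (hZC : (Z ∩ C).Nonempty) :
    Z ⊆ Y ∨ Y ⊆ Z := by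
  by_contra hcon
  push Not at hcon
  obtain ⟨hZY, hYZ⟩ := hcon
  have : PreconnectedSpace S2 := preconnectedSpace_S2
  have : LocallyConnectedSpace S2 := locallyConnectedSpace_S2
  have hW : IsPreconnected Xᶜ := not_not.1 hXns
  have hYc : Y ⊆ closure Xᶜ := by
    rw [frontier_eq_closure_inter_closure] at hYX
    exact hYX.trans inter_subset_right
  have hYX' : Y ⊆ X := by
    have := hYX.trans frontier_subset_closure
    rwa [hX.1.isClosed.closure_eq] at this
  have hmeet : ∀ p ∈ Y, (Z ∩ composant Y p).Nonempty := fun p hp =>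
    hC.2 Z hZ hZC hZY _ ⟨p, hp, rfl⟩
  have hYcl : IsClosed Y := hY.1.1.isClosed
  have hnt : Y.Nontrivial := by
    obtain ⟨z, -, hzC⟩ := hZC
    obtain ⟨p, hp, rfl⟩ := hC.1
    obtain ⟨K, ⟨-, hKY, hKne, hpK⟩, -⟩ := hzC
    obtain ⟨q, hq, hqK⟩ := exists_of_ssubset (hKY.ssubset_of_ne hKne)
    exact ⟨p, hp, q, hq, fun h => hqK (h ▸ hpK)⟩
  obtain ⟨w, hw⟩ : (Xᶜ).Nonempty := by
    obtain ⟨y, hy⟩ := hY.1.2.nonempty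
    exact closure_nonempty_iff.1 ⟨y, hYc hy⟩
  obtain ⟨Z1, hZ1, -, hZ1sub, hYZ1, D, hD, hDY, hDZ⟩ := hY.exists_enlargement hZ hYZ hmeet
  have hZ1X : Z1 ⊆ X := hZ1sub.trans (union_subset hZX hYX')
  have hwZ1 : w ∉ Z1 := fun h => hw (hZ1X h)
  -- The union `Z2` of `Z1` and of the components of its complement missing `Xᶜ`.
  obtain ⟨O, hOdef⟩ : ∃ O, O = connectedComponentIn Z1ᶜ w := ⟨_, rfl⟩
  have hOo : IsOpen O := hOdef ▸ hZ1.1.isClosed.isOpen_compl.connectedComponentIn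
  have hOc : IsPreconnected O := hOdef ▸ isPreconnected_connectedComponentIn
  have hwO : w ∈ O := hOdef ▸ mem_connectedComponentIn hwZ1
  have hOZ1 : O ⊆ Z1ᶜ := hOdef ▸ connectedComponentIn_subset _ _
  have hWO : Xᶜ ⊆ O := hOdef ▸ hW.subset_connectedComponentIn hw (compl_subset_compl.2 hZ1X)
  have hZ2c : IsPreconnected Oᶜ :=
    hOdef ▸ isPreconnected_compl_component hZ1.1.isClosed hZ1.2.isPreconnected hwZ1
  have hYZ2 : Y ∩ Oᶜ ⊆ Z1 := by
    rintro y ⟨hyY, hyO⟩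
    by_contra hyZ1
    -- The component of `y` in the complement of `Z1` is a neighbourhood of `y`, so it meets `Xᶜ`.
    have hopen : IsOpen (connectedComponentIn Z1ᶜ y) :=
      hZ1.1.isClosed.isOpen_compl.connectedComponentIn
    obtain ⟨x, hxy, hxX⟩ := _root_.mem_closure_iff.1 (hYc hyY) _ hopen
      (mem_connectedComponentIn hyZ1)
    have hxO := hWO hxX
    rw [hOdef] at hxO hyO
    rw [connectedComponentIn_eq hxO, ← connectedComponentIn_eq hxy] at hyO
    exact hyO (mem_connectedComponentIn hyZ1)
  have hZ2cl : IsClosed Oᶜ := hOo.isClosed_compl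
  have hYZ2' : ¬ Y ⊆ Oᶜ := fun h => hYZ1 fun y hy => hYZ2 ⟨hy, h hy⟩
  have hDZ2 : D ∩ Y ⊆ Oᶜ := fun x hx hxO => hOZ1 hxO (hDZ hx)
  -- Every composant contains a continuum `Q` which, together with `Oᶜ`, cuts off an open set `G`.
  have hG : ∀ C' : {C' | IsComposant Y C'}, ∃ Q G : Set S2, Q ⊆ C'.1 ∧ IsClosed Q ∧ IsOpen G ∧
      G.Nonempty ∧ Disjoint G (Oᶜ ∪ Q) ∧ IsClosed (G ∪ (Oᶜ ∪ Q)) ∧ w ∉ G ∧ Disjoint G Y := by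
    rintro ⟨_, p, hp, rfl⟩
    obtain ⟨Q, hQ, hQY, hQne, hpQ, hdis⟩ :=
      hY.exists_disconnected_inter hnt hp hZ2cl hYZ2' hD hDY hDZ2
    have hwQ : w ∉ Q := fun h => hw (hYX' (hQY h))
    obtain ⟨G, hGo, hGne, hGd, hGc, hwG⟩ := exists_open_of_disconnected_inter hZ2cl
      hQ.1.isClosed hZ2c hQ.2.isPreconnected (fun h => h hwO) hwQ hdis
    refine ⟨Q, G, fun x hx => ⟨Q, ⟨hQ, hQY, hQne, hpQ⟩, hx⟩, hQ.1.isClosed, hGo, hGne, hGd, hGc,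
      hwG, ?_⟩
    have hGW : Disjoint G Xᶜ := by
      have hsub : Xᶜ ⊆ G ∪ (G ∪ (Oᶜ ∪ Q))ᶜ := by
        intro x hx
        by_cases hxG : x ∈ G
        · exact Or.inl hxG
        · right
          rintro (h | h | h)
          · exact hxG h
          · exact h (hWO hx)
          · exact hx (hYX' (hQY h))
      rcases hW.subset_or_subset hGo hGc.isOpen_compl
        (disjoint_left.2 fun x hx hx' => hx' (Or.inl hx)) hsub with h | h
      · exact absurd (h hw) hwG
      · exact disjoint_left.2 fun x hx hx' => h hx' (Or.inl hx)
    exact (hGW.closure_right hGo).mono_right hYc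
  choose Q G hQC hQcl hGo hGne hGd hGcl hwG hGY using hG
  have hpd : Pairwise (Function.onFun Disjoint G) := by
    intro C₁ C₂ hne
    -- Different composants are disjoint.
    have hCd : Disjoint C₁.1 C₂.1 := by
      rw [disjoint_left]
      intro x hx₁ hx₂
      obtain ⟨_, p₁, hp₁, rfl⟩ := C₁
      obtain ⟨_, p₂, hp₂, rfl⟩ := C₂
      exact hne (Subtype.ext ((hY.composant_subset_of_mem hx₁ hx₂).antisymm
        (hY.composant_subset_of_mem hx₂ hx₁)))
    have hQY : ∀ C', Q C' ⊆ Y := by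
      rintro ⟨_, p, hp, rfl⟩ x hx
      obtain ⟨K, hK, hxK⟩ := hQC _ hx
      exact hK.2.1 hxK
    have hGO : ∀ C', G C' ⊆ O := fun C' x hx => by
      by_contra hxO
      exact disjoint_left.1 (hGd C') hx (Or.inl hxO)
    rw [Function.onFun, disjoint_iff_inter_eq_empty, ← not_nonempty_iff_eq_empty]
    rintro ⟨x₀, hx₀⟩
    -- `G C₁ ∩ G C₂` is relatively clopen in `O`: a boundary point in `O` would lie on exactly one
    -- of the disjoint sets `Q C₁`, `Q C₂`, hence in the other `G`, which misses `Y`.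
    have hsub : closure (G C₁ ∩ G C₂) ∩ O ⊆ G C₁ ∩ G C₂ := by
      rintro x ⟨hx, hxO⟩
      have hmem : ∀ C', x ∈ closure (G C') → x ∈ G C' ∨ x ∈ Q C' := by
        intro C' hxc
        rcases closure_minimal subset_union_left (hGcl C') hxc with h | h | h
        exacts [Or.inl h, absurd hxO h, Or.inr h]
      rcases hmem C₁ (closure_mono inter_subset_left hx) with h₁ | h₁ <;>
        rcases hmem C₂ (closure_mono inter_subset_right hx) with h₂ | h₂
      · exact ⟨h₁, h₂⟩
      · exact absurd (hQY _ h₂) (disjoint_left.1 (hGY C₁) h₁)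
      · exact absurd (hQY _ h₁) (disjoint_left.1 (hGY C₂) h₂)
      · exact absurd (hQC _ h₂) (disjoint_left.1 hCd (hQC _ h₁))
    have hO := hOc.subset_of_closure_inter_subset ((hGo C₁).inter (hGo C₂))
      ⟨x₀, hGO C₁ hx₀.1, hx₀⟩ hsub
    exact hwG C₁ (hO hwO).1
  exact hY.not_countable_composants hnt (countable_coe_iff.1
    (hpd.countable_of_isOpen_disjoint hGo hGne))
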